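/- For integers a, b not divisible by N, the integral ∫₀^∞ (1/(iNt)) d[ ∑_{m≥1} ((ζ^{am} − ζ^{−am})/m) ( ∑_{n≥1, n≡b mod N} − ∑_{n≥1, n≡−b mod N} ) exp(−2πmn/(N²t)) ] equals −i·Cl₂(2πa/N)·(1+ζ^b)/(1−ζ^b), where ζ = exp(2πi/N). -/

import Mathlib

open Real MeasureTheory

/-- Clausen's dilogarithmic function `Cl₂(x) = ∑_{m≥1} sin(mx)/m²`. -/
noncomputable def Cl2 (x : ℝ) : ℝ := ∑' m : ℕ+, Real.sin (m * x) / (m : ℝ) ^ 2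

/-- The root of unity `ζ_N = exp(2πi/N)`. -/
noncomputable def zetaN (N : ℤ) : ℂ := Complex.exp (2 * π * Complex.I / N)

/-- The double series
`S(t) = ∑_{m≥1} ((ζ^{am}-ζ^{-am})/m) (∑_{n≡b (N)} - ∑_{n≡-b (N)}) exp(-2πmn/(N²t))`. -/
noncomputable def Sser (N a b : ℤ) (t : ℝ) : ℂ :=
  ∑' p : ℕ+ × ℕ+,
    ((zetaN N ^ (a * (p.1 : ℤ)) - zetaN N ^ (-(a * (p.1 : ℤ)))) / (p.1 : ℂ)) *
      (if (p.2 : ℤ) ≡ b [ZMOD N] then 1 else if (p.2 : ℤ) ≡ -b [ZMOD N] then -1 else 0) *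
      Complex.exp (-(2 * π * (p.1 : ℝ) * (p.2 : ℝ)) / ((N : ℝ) ^ 2 * t))


theorem abs_mul_mul_exp_le {x y k z : ℝ} (hx : |x| ≤ 1) (hy : |y| ≤ 1) (hk : 0 ≤ k) :
    |x * y * (k * rexp z)| ≤ k * rexp z := by
  rw [abs_mul, abs_mul, abs_of_nonneg (by positivity : 0 ≤ k * rexp z)]
  exact mul_le_of_le_one_left (by positivity) (mul_le_one₀ hx (abs_nonneg _) hy)

theorem summable_mul_exp_neg_mul_pnat {c : ℝ} (hc : 0 < c) :
    Summable fun p : ℕ+ × ℕ+ => (p.2 : ℝ) * rexp (-(c * p.1 * p.2)) := by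
  have h (k : ℕ) : Summable fun n : ℕ+ => (n : ℝ) ^ k * rexp (-c * n) :=
    (Real.summable_pow_mul_exp_neg_nat_mul k hc).comp_injective PNat.coe_injective
  have hprod := ((h 0).mul_of_nonneg (h 1) (fun _ => by positivity)
    (fun _ => by positivity)).mul_left (rexp c)
  refine hprod.of_nonneg_of_le (fun _ => by positivity) fun p => ?_
  have h1 : (1 : ℝ) ≤ p.1 := by exact_mod_cast Order.one_le_iff_pos.2 p.1.pos
  have h2 : (1 : ℝ) ≤ p.2 := by exact_mod_cast Order.one_le_iff_pos.2 p.2.pos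
  have e : rexp c * ((p.1 : ℝ) ^ 0 * rexp (-c * p.1) * ((p.2 : ℝ) ^ 1 * rexp (-c * p.2))) =
      p.2 * rexp (c + -c * p.1 + -c * p.2) := by
    rw [Real.exp_add, Real.exp_add]; ring
  rw [e]
  gcongr
  nlinarith [mul_nonneg hc.le (mul_nonneg (sub_nonneg.2 h1) (sub_nonneg.2 h2))]

theorem summable_mul_mul_exp {s e : ℕ+ → ℝ} (hs : ∀ m, |s m| ≤ 1) (he : ∀ n, |e n| ≤ 1)
    {c : ℝ} (hc : 0 < c) :
    Summable fun p : ℕ+ × ℕ+ => s p.1 * e p.2 * (p.2 * rexp (-(c * p.1 * p.2))) :=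
  .of_norm_bounded (summable_mul_exp_neg_mul_pnat hc) fun p =>
    abs_mul_mul_exp_le (hs _) (he _) (by positivity)

theorem hasDerivAt_tsum_exp {s e : ℕ+ → ℝ} (hs : ∀ m, |s m| ≤ 1) (he : ∀ n, |e n| ≤ 1)
    {c u : ℝ} (hc : 0 < c) (hu : 0 < u) :
    HasDerivAt (fun u => ∑' p : ℕ+ × ℕ+, s p.1 / p.1 * e p.2 * rexp (-(c * p.1 * p.2 * u)))
      (-c * ∑' p : ℕ+ × ℕ+, s p.1 * e p.2 * (p.2 * rexp (-(c * u * p.1 * p.2)))) u := by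
  have hpos : 0 < c * (u / 2) := by positivity
  have hone (m : ℕ+) : (1 : ℝ) ≤ m := by exact_mod_cast Order.one_le_iff_pos.2 m.pos
  rw [← tsum_mul_left]
  refine hasDerivAt_tsum_of_isPreconnected (t := Set.Ioi (u / 2)) (y₀ := u)
    ((summable_mul_exp_neg_mul_pnat hpos).mul_left c) isOpen_Ioi isPreconnected_Ioi
    (g' := fun p y => -c * (s p.1 * e p.2 * (p.2 * rexp (-(c * y * p.1 * p.2))))) ?_ ?_
    (half_lt_self hu) ?_ (half_lt_self hu)
  · intro p y _
    have h := ((((hasDerivAt_id y).const_mul (c * p.1 * p.2)).neg).exp).const_mul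
      (s p.1 / p.1 * e p.2)
    convert! h using 1
    have : (p.1 : ℝ) ≠ 0 := by positivity
    simp only [id, Pi.neg_apply]
    rw [show -(c * y * (p.1 : ℝ) * p.2) = -(c * p.1 * p.2 * y) by ring]
    field_simp
  · intro p y hy
    rw [norm_mul, norm_neg, Real.norm_of_nonneg hc.le]
    gcongr
    refine (abs_mul_mul_exp_le (hs _) (he _) (by positivity)).trans ?_
    have : u / 2 ≤ y := le_of_lt hy
    gcongr
  · refine .of_norm_bounded (summable_mul_exp_neg_mul_pnat (mul_pos hc hu)) fun p => ?_
    have h1 := hone p.1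
    have h2 := hone p.2
    rw [norm_mul, norm_mul, norm_div, Real.norm_of_nonneg (exp_pos _).le,
      Real.norm_of_nonneg (by positivity : (0 : ℝ) ≤ p.1),
      show -(c * (p.1 : ℝ) * p.2 * u) = -(c * u * p.1 * p.2) by ring]
    gcongr
    refine (mul_le_one₀ ?_ (norm_nonneg _) (he _)).trans h2
    exact div_le_one_of_le₀ ((hs _).trans h1) (by positivity)

theorem integral_inv_mul_deriv_comp_inv {R D : ℝ → ℝ} {S : ℝ → ℂ} {c : ℝ} (N : ℂ)
    (hR : ∀ u, 0 < u → HasDerivAt R (-c * D u) u)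
    (hS : ∀ t, 0 < t → S t = 2 * Complex.I * R t⁻¹) :
    ∫ t in Set.Ioi (0 : ℝ), (1 / (Complex.I * N * t)) * deriv S t =
      2 * c / N * (∫ u in Set.Ioi (0 : ℝ), u * D u : ℝ) := by
  rw [← integral_comp_rpow_Ioi (fun u => u * D u) (neg_ne_zero.2 one_ne_zero),
    ← integral_complex_ofReal, ← integral_const_mul]
  refine setIntegral_congr_fun measurableSet_Ioi fun t ht => ?_
  have ht : 0 < t := ht
  have hd : HasDerivAt S (2 * Complex.I * ((-c * D t⁻¹ * -(t ^ 2)⁻¹ : ℝ) : ℂ)) t := by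
    refine HasDerivAt.congr_of_eventuallyEq (f := fun t => 2 * Complex.I * (R t⁻¹ : ℂ)) ?_ ?_
    · exact (((hR t⁻¹ (inv_pos.2 ht)).comp t (hasDerivAt_inv ht.ne')).ofReal_comp).const_mul _
    · filter_upwards [lt_mem_nhds ht] with y hy using hS y hy
  have e : t ^ (-1 - 1 : ℝ) = (t ^ 2)⁻¹ := by
    rw [show (-1 - 1 : ℝ) = -(2 : ℕ) by norm_num, rpow_neg ht.le, rpow_natCast]
  simp only [hd.deriv, e, rpow_neg_one]
  have : (t : ℂ) ≠ 0 := by exact_mod_cast ht.ne'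
  rcases eq_or_ne N 0 with rfl | hN
  · simp
  simp only [Complex.ofReal_mul, Complex.ofReal_neg, Complex.ofReal_inv, Complex.ofReal_pow,
    smul_eq_mul, abs_neg, abs_one, one_mul]
  field_simp

theorem integral_mul_exp_neg_mul_Ioi {r : ℝ} (hr : 0 < r) :
    ∫ u in Set.Ioi (0 : ℝ), u * rexp (-(r * u)) = 1 / r ^ 2 := by
  have h := Real.integral_rpow_mul_exp_neg_mul_Ioi (a := 2) two_pos hr
  norm_num [Real.Gamma_two] at h
  simpa using h

theorem integrableOn_mul_exp_neg_mul_Ioi {r : ℝ} (hr : 0 < r) :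
    IntegrableOn (fun u => u * rexp (-(r * u))) (Set.Ioi 0) :=
  .of_integral_ne_zero (by rw [integral_mul_exp_neg_mul_Ioi hr]; positivity)

theorem abs_mul_exp_sub_mul_exp_le {d p q v : ℝ} (hd : 0 < d) (hv : 0 < v) (hp : d ≤ p)
    (hq : d ≤ q) :
    |p * rexp (-(v * p)) - q * rexp (-(v * q))| ≤ 2 * rexp (-(v * d / 2)) * |p - q| := by
  refine (convex_Ici d).norm_image_sub_le_of_norm_hasDerivWithin_le
    (f := fun x => x * rexp (-(v * x))) (f' := fun x => (1 - v * x) * rexp (-(v * x)))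
    (fun x _ => ?_) (fun x hx => ?_) hq hp
  · have h := (hasDerivAt_id x).mul (((hasDerivAt_id x).const_mul v).neg.exp)
    refine HasDerivAt.hasDerivWithinAt ?_
    convert! h using 1
    simp
    ring
  · have hx : d ≤ x := hx
    have hvx : 0 < v * x := mul_pos hv (hd.trans_le hx)
    have hexp : rexp (-(v * x)) = rexp (-(v * x / 2)) * rexp (-(v * x / 2)) := by
      rw [← Real.exp_add]; ring_nf
    have hle : (1 + v * x) * rexp (-(v * x / 2)) ≤ 2 := by
      rw [Real.exp_neg, ← div_eq_mul_inv, div_le_iff₀ (exp_pos _)]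
      linarith [Real.add_one_le_exp (v * x / 2)]
    rw [norm_mul, Real.norm_of_nonneg (exp_pos _).le]
    calc ‖1 - v * x‖ * rexp (-(v * x)) ≤ (1 + v * x) * rexp (-(v * x)) := by
          gcongr
          rw [Real.norm_eq_abs, abs_le]
          constructor <;> linarith
      _ = ((1 + v * x) * rexp (-(v * x / 2))) * rexp (-(v * x / 2)) := by rw [hexp]; ring
      _ ≤ 2 * rexp (-(v * d / 2)) := by gcongr

theorem integral_tsum_exp_sub_exp {s : ℕ+ → ℝ} (hs : ∀ m, |s m| ≤ 1) {p q : ℕ → ℝ}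
    (hp : ∀ k : ℕ, (k + 1 : ℝ) ≤ p k) (hq : ∀ k : ℕ, (k + 1 : ℝ) ≤ q k) {L : ℝ}
    (hL : ∀ k, |p k - q k| ≤ L) {c : ℝ} (hc : 0 < c) :
    ∫ u in Set.Ioi (0 : ℝ), ∑' i : ℕ+ × ℕ, u * (s i.1 *
        (p i.2 * rexp (-(c * u * i.1 * p i.2)) - q i.2 * rexp (-(c * u * i.1 * q i.2)))) =
      ∑' i : ℕ+ × ℕ, s i.1 / (i.1 : ℝ) ^ 2 * ((1 / p i.2 - 1 / q i.2) / c ^ 2) := by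
  have hp0 (k : ℕ) : 0 < p k := lt_of_lt_of_le (by positivity) (hp k)
  have hq0 (k : ℕ) : 0 < q k := lt_of_lt_of_le (by positivity) (hq k)
  have hform (i : ℕ+ × ℕ) (u : ℝ) : u * (s i.1 *
        (p i.2 * rexp (-(c * u * i.1 * p i.2)) - q i.2 * rexp (-(c * u * i.1 * q i.2)))) =
      s i.1 * p i.2 * (u * rexp (-((c * i.1 * p i.2) * u))) -
        s i.1 * q i.2 * (u * rexp (-((c * i.1 * q i.2) * u))) := by
    ring_nf
  have hcp (i : ℕ+ × ℕ) : 0 < c * i.1 * p i.2 := by have := hp0 i.2; positivity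
  have hcq (i : ℕ+ × ℕ) : 0 < c * i.1 * q i.2 := by have := hq0 i.2; positivity
  have hcd (i : ℕ+ × ℕ) : 0 < c * i.1 * (i.2 + 1) / 2 := by positivity
  have hip (i : ℕ+ × ℕ) := (integrableOn_mul_exp_neg_mul_Ioi (hcp i)).const_mul (s i.1 * p i.2)
  have hiq (i : ℕ+ × ℕ) := (integrableOn_mul_exp_neg_mul_Ioi (hcq i)).const_mul (s i.1 * q i.2)
  have hL0 : 0 ≤ L := (abs_nonneg _).trans (hL 0)
  rw [← integral_tsum_of_summable_integral_norm]
  · refine tsum_congr fun i => ?_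
    simp only [hform]
    rw [integral_sub (hip i) (hiq i), integral_const_mul, integral_const_mul,
      integral_mul_exp_neg_mul_Ioi (hcp i), integral_mul_exp_neg_mul_Ioi (hcq i)]
    have := (hp0 i.2).ne'
    have := (hq0 i.2).ne'
    field_simp
  · intro i
    simp only [hform]
    exact (hip i).sub (hiq i)
  · have h1 : Summable fun m : ℕ+ => 1 / (m : ℝ) ^ 2 :=
      (Real.summable_one_div_nat_pow.2 one_lt_two).comp_injective PNat.coe_injective
    have h2 : Summable fun k : ℕ => 1 / ((k + 1 : ℕ) : ℝ) ^ 2 :=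
      (summable_nat_add_iff 1).2 (Real.summable_one_div_nat_pow.2 one_lt_two)
    refine ((h1.mul_of_nonneg h2 (fun _ => by positivity) fun _ => by positivity).mul_left
      (8 * L / c ^ 2)).of_nonneg_of_le (fun _ => integral_nonneg fun _ => norm_nonneg _)
      fun i => ?_
    calc _ ≤ ∫ u in Set.Ioi (0 : ℝ), 2 * L * (u * rexp (-((c * i.1 * (i.2 + 1) / 2) * u))) := by
          refine setIntegral_mono_on ?_ ((integrableOn_mul_exp_neg_mul_Ioi (hcd i)).const_mul _)
            measurableSet_Ioi fun u hu => ?_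
          · simp only [hform]
            exact ((hip i).sub (hiq i)).norm
          · have hu : 0 < u := hu
            rw [norm_mul, norm_mul, Real.norm_of_nonneg hu.le]
            have h := abs_mul_exp_sub_mul_exp_le (v := c * u * i.1) (by positivity)
              (by positivity) (hp i.2) (hq i.2)
            calc _ ≤ u * (1 * (2 * rexp (-(c * u * i.1 * (i.2 + 1) / 2)) * L)) := by
                  gcongr
                  · exact hs _
                  · exact h.trans (by gcongr; exact hL _)
              _ = _ := by ring_nf
      _ = _ := by
          rw [integral_const_mul, integral_mul_exp_neg_mul_Ioi (hcd i)]
          push_cast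
          field_simp
          ring

theorem tsum_prod_mul_eq_tsum_sub {f : ℕ+ × ℕ+ → ℝ} (hf : Summable f) {e : ℕ+ → ℝ}
    {P Q : ℕ → ℕ+} (hP : P.Injective) (hQ : Q.Injective) (heP : ∀ k, e (P k) = 1)
    (heQ : ∀ k, e (Q k) = -1) (he : ∀ n, n ∉ Set.range P → n ∉ Set.range Q → e n = 0) :
    ∑' i : ℕ+ × ℕ+, e i.2 * f i = ∑' i : ℕ+ × ℕ, (f (i.1, P i.2) - f (i.1, Q i.2)) := by
  classical
  have key {R : ℕ → ℕ+} (hR : R.Injective) :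
      HasSum (fun i : ℕ+ × ℕ+ => if i.2 ∈ Set.range R then f i else 0)
        (∑' i : ℕ+ × ℕ, f (i.1, R i.2)) := by
    have hinj : (Prod.map id R : ℕ+ × ℕ → ℕ+ × ℕ+).Injective := Function.injective_id.prodMap hR
    refine (hinj.hasSum_iff ?_).1 ?_
    · rintro ⟨m, n⟩ hn
      refine if_neg fun ⟨k, hk⟩ => hn ⟨(m, k), by simpa using hk⟩
    · convert! (hf.comp_injective hinj).hasSum using 1
      ext i
      simp
  have hPs := hf.comp_injective (Function.injective_id.prodMap hP)
  have hQs := hf.comp_injective (Function.injective_id.prodMap hQ)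
  rw [Summable.tsum_sub (f := fun i : ℕ+ × ℕ => f (i.1, P i.2))
    (g := fun i : ℕ+ × ℕ => f (i.1, Q i.2)) hPs hQs]
  rw [← ((key hP).sub (key hQ)).tsum_eq]
  refine tsum_congr fun i => ?_
  by_cases h1 : i.2 ∈ Set.range P
  · have h2 : i.2 ∉ Set.range Q := by
      rintro ⟨k, hk⟩
      obtain ⟨j, hj⟩ := h1
      have h3 := heP j
      rw [hj, ← hk, heQ k] at h3
      norm_num at h3
    obtain ⟨j, hj⟩ := h1
    rw [if_pos ⟨j, hj⟩, if_neg h2, ← hj, heP]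
    ring
  · by_cases h2 : i.2 ∈ Set.range Q
    · obtain ⟨j, hj⟩ := h2
      rw [if_neg h1, if_pos ⟨j, hj⟩, ← hj, heQ]
      ring
    · simp [h1, h2, he _ h1 h2]

theorem hasSum_one_div_sub_one_div_eq_cot {x : ℝ} (h0 : 0 < x) (h1 : x < 1) :
    HasSum (fun k : ℕ => 1 / (k + x) - 1 / (k + 1 - x)) (π * Real.cot (π * x)) := by
  have hx : (x : ℂ) ∈ Complex.integerComplement := by
    rintro ⟨n, hn⟩
    have hn : (n : ℝ) = x := by exact_mod_cast hn
    rw [← hn] at h0 h1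
    have h0 : 0 < n := by exact_mod_cast h0
    have h1 : n < 1 := by exact_mod_cast h1
    omega
  have hcot : HasSum (fun n : ℕ => 1 / (x - (n + 1)) + 1 / (x + (n + 1)))
      (π * Real.cot (π * x) - 1 / x) := by
    have h := (summable_cotTerm hx).hasSum
    have h' := cot_series_rep' hx
    unfold cotTerm at h
    rw [← h'] at h
    exact_mod_cast h
  have htel : HasSum (fun k : ℕ => 1 / (x + k) - 1 / (x + (k + 1))) (1 / x) := by
    rw [hasSum_iff_tendsto_nat_of_nonneg]
    · have h (n : ℕ) : ∑ k ∈ Finset.range n, (1 / (x + k) - 1 / (x + (k + 1))) =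
          1 / x - 1 / (x + n) := by
        simpa using Finset.sum_range_sub' (fun k : ℕ => 1 / (x + k)) n
      simp only [h]
      have h2 : Filter.Tendsto (fun n : ℕ => 1 / (x + n)) Filter.atTop (nhds 0) := by
        simp only [one_div]
        exact (Filter.tendsto_atTop_add_const_left _ _
          tendsto_natCast_atTop_atTop).inv_tendsto_atTop
      simpa using h2.const_sub (1 / x)
    · intro k
      rw [sub_nonneg]
      gcongr
      linarith
  convert! hcot.add htel using 1
  · ext k
    rw [show x - ((k : ℝ) + 1) = -(k + 1 - x) by ring, div_neg, add_comm x (k : ℝ)]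
    ring
  · ring

theorem tsum_sin_mul_pow {x θ : ℝ} (h0 : 0 < x) (h1 : x < 1) :
    ∑' m : ℕ+, Real.sin (m * θ) * x ^ (m : ℕ) =
      x * Real.sin θ / Complex.normSq (1 - x * Complex.exp (θ * Complex.I)) := by
  set z : ℂ := x * Complex.exp (θ * Complex.I) with hz
  have hnorm : ‖z‖ < 1 := by
    rw [hz, norm_mul, Complex.norm_exp_ofReal_mul_I, mul_one, Complex.norm_real,
      Real.norm_of_nonneg h0.le]
    exact h1
  have him (n : ℕ) : (z ^ n).im = Real.sin (n * θ) * x ^ n := by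
    rw [hz, mul_pow, ← Complex.exp_nat_mul, ← Complex.ofReal_pow, Complex.im_ofReal_mul,
      show (n : ℂ) * (θ * Complex.I) = ((n * θ : ℝ) : ℂ) * Complex.I by push_cast; ring,
      Complex.exp_ofReal_mul_I_im, mul_comm]
  have hsum : HasSum (fun n : ℕ => Real.sin (n * θ) * x ^ n) ((1 - z)⁻¹).im := by
    simpa only [him] using Complex.hasSum_im (hasSum_geometric_of_norm_lt_one hnorm)
  have hpnat : HasSum (fun m : ℕ+ => Real.sin (m * θ) * x ^ (m : ℕ)) ((1 - z)⁻¹).im := by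
    refine (PNat.coe_injective.hasSum_iff (f := fun n : ℕ => Real.sin (n * θ) * x ^ n) ?_).2 hsum
    intro n hn
    obtain rfl : n = 0 := by
      by_contra h
      exact hn ⟨⟨n, Nat.pos_of_ne_zero h⟩, rfl⟩
    simp
  rw [hpnat.tsum_eq, Complex.inv_im]
  have hzim := him 1
  simp only [pow_one, Nat.cast_one, one_mul] at hzim
  rw [Complex.sub_im, Complex.one_im, hzim]
  ring

theorem sin_sq_div_four_mul_le {x θ : ℝ} (h0 : 0 < x) (h1 : x < 1) :
    Real.sin θ ^ 2 / 4 * x ≤ Real.sin θ * ∑' m : ℕ+, Real.sin (m * θ) * x ^ (m : ℕ) := by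
  rw [tsum_sin_mul_pow h0 h1, Complex.normSq_eq_norm_sq]
  have hz : ‖(x : ℂ) * Complex.exp (θ * Complex.I)‖ = x := by
    rw [norm_mul, Complex.norm_exp_ofReal_mul_I, mul_one, Complex.norm_real,
      Real.norm_of_nonneg h0.le]
  have hlow := norm_sub_norm_le (1 : ℂ) (x * Complex.exp (θ * Complex.I))
  have hup := norm_sub_le (1 : ℂ) (x * Complex.exp (θ * Complex.I))
  rw [hz, norm_one] at hlow hup
  set w := ‖1 - (x : ℂ) * Complex.exp (θ * Complex.I)‖
  have hw : 0 < w := by linarith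
  rw [show Real.sin θ * (x * Real.sin θ / w ^ 2) = Real.sin θ ^ 2 * x / w ^ 2 by ring,
    show Real.sin θ ^ 2 / 4 * x = Real.sin θ ^ 2 * x / 4 by ring]
  gcongr
  nlinarith

theorem integral_mul_tsum_sin_eq_zero {θ c : ℝ} (hθ : Real.sin θ ≠ 0) (hc : 0 < c) {e : ℕ+ → ℝ}
    (he0 : ∀ n, 0 ≤ e n) (he1 : ∀ n, e n ≤ 1) (he : ¬ Summable fun n : ℕ+ => e n / n) :
    ∫ u in Set.Ioi (0 : ℝ), u * ∑' i : ℕ+ × ℕ+,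
      Real.sin (i.1 * θ) * e i.2 * (i.2 * rexp (-(c * u * i.1 * i.2))) = 0 := by
  refine integral_undef fun hint => he ?_
  set D : ℝ → ℝ := fun u => ∑' i : ℕ+ × ℕ+,
      Real.sin (i.1 * θ) * e i.2 * (i.2 * rexp (-(c * u * i.1 * i.2))) with hD
  have hκ : 0 < Real.sin θ ^ 2 / 4 / c ^ 2 := by positivity
  refine (summable_mul_left_iff hκ.ne').1 ?_
  have hterm (n : ℕ+) : IntegrableOn (fun u => Real.sin θ ^ 2 / 4 * (e n * n) *
      (u * rexp (-(c * n * u)))) (Set.Ioi 0) :=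
    (integrableOn_mul_exp_neg_mul_Ioi (by positivity)).const_mul _
  refine summable_of_sum_le (c := ∫ u in Set.Ioi (0 : ℝ), Real.sin θ * (u * D u))
    (fun n => mul_nonneg hκ.le (div_nonneg (he0 n) (by positivity))) fun F => ?_
  calc ∑ n ∈ F, Real.sin θ ^ 2 / 4 / c ^ 2 * (e n / n)
      = ∫ u in Set.Ioi (0 : ℝ), ∑ n ∈ F, Real.sin θ ^ 2 / 4 * (e n * n) *
          (u * rexp (-(c * n * u))) := by
        rw [integral_finsetSum _ fun n _ => hterm n]
        refine Finset.sum_congr rfl fun n _ => ?_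
        rw [integral_const_mul, integral_mul_exp_neg_mul_Ioi (by positivity)]
        field_simp
    _ ≤ _ := by
        refine setIntegral_mono_on (integrable_finsetSum _ fun n _ => hterm n)
          (hint.const_mul _) measurableSet_Ioi fun u hu => ?_
        have hu : 0 < u := hu
        have hs := summable_mul_mul_exp (s := fun m => Real.sin (m * θ)) (e := e)
          (fun m => abs_sin_le_one _) (fun n => abs_le.2 ⟨by linarith [he0 n], he1 n⟩)
          (mul_pos hc hu)
        have hx0 (n : ℕ+) : 0 < rexp (-(c * u * n)) := exp_pos _
        have hx1 (n : ℕ+) : rexp (-(c * u * n)) < 1 := by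
          rw [Real.exp_lt_one_iff, neg_lt_zero]; positivity
        have hpow (m n : ℕ+) : rexp (-(c * u * m * n)) = rexp (-(c * u * n)) ^ (m : ℕ) := by
          rw [← Real.exp_nat_mul]; ring_nf
        have hinner (n : ℕ+) :
            ∑' m : ℕ+, Real.sin (m * θ) * e n * (n * rexp (-(c * u * m * n))) =
              e n * n * ∑' m : ℕ+, Real.sin (m * θ) * rexp (-(c * u * n)) ^ (m : ℕ) := by
          rw [← tsum_mul_left]
          exact tsum_congr fun m => by rw [hpow]; ring
        have hDu : D u = ∑' n : ℕ+, e n * n *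
            ∑' m : ℕ+, Real.sin (m * θ) * rexp (-(c * u * n)) ^ (m : ℕ) := by
          simp only [← hinner]
          rw [hD]
          exact ((Equiv.prodComm ℕ+ ℕ+).tsum_eq _).symm.trans hs.prod_symm.tsum_prod
        have hsum : Summable fun n : ℕ+ => Real.sin θ * (u * (e n * n *
            ∑' m : ℕ+, Real.sin (m * θ) * rexp (-(c * u * n)) ^ (m : ℕ))) := by
          simp only [← hinner]
          exact (hs.prod_symm.prod.mul_left u).mul_left (Real.sin θ)
        have hle (n : ℕ+) : Real.sin θ ^ 2 / 4 * (e n * n) * (u * rexp (-(c * n * u))) ≤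
            Real.sin θ * (u * (e n * n *
              ∑' m : ℕ+, Real.sin (m * θ) * rexp (-(c * u * n)) ^ (m : ℕ))) := by
          have h := mul_le_mul_of_nonneg_left (sin_sq_div_four_mul_le (θ := θ) (hx0 n) (hx1 n))
            (mul_nonneg hu.le (mul_nonneg (he0 n) (by positivity : (0 : ℝ) ≤ n)))
          rw [show c * (n : ℝ) * u = c * u * n by ring]
          calc _ = u * (e n * n) * (Real.sin θ ^ 2 / 4 * rexp (-(c * u * n))) := by ring
            _ ≤ _ := h
            _ = _ := by ring
        rw [hDu, ← tsum_mul_left, ← tsum_mul_left]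
        refine (Finset.sum_le_sum fun n _ => hle n).trans (hsum.sum_le_tsum F fun n _ => ?_)
        refine le_trans ?_ (hle n)
        have := he0 n
        positivity

/-- The sign `ε(n)`, equal to `1` if `n ≡ b`, to `-1` if `n ≡ -b ≢ b`, and to `0` otherwise. -/
def residueSign (N b : ℤ) (n : ℕ+) : ℝ :=
  if (n : ℤ) ≡ b [ZMOD N] then 1 else if (n : ℤ) ≡ -b [ZMOD N] then -1 else 0

theorem abs_residueSign_le_one (N b : ℤ) (n : ℕ+) : |residueSign N b n| ≤ 1 := by
  unfold residueSign
  split_ifs <;> simp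

theorem zetaN_zpow (N k : ℤ) :
    zetaN N ^ k = Complex.exp (((2 * π * k / N : ℝ) : ℂ) * Complex.I) := by
  rw [zetaN, ← Complex.exp_int_mul]
  push_cast
  ring_nf

theorem zetaN_zpow_sub_zpow_neg (N k : ℤ) :
    zetaN N ^ k - zetaN N ^ (-k) = 2 * Complex.I * (Real.sin (2 * π * k / N) : ℂ) := by
  rw [zpow_neg, zetaN_zpow, ← Complex.exp_neg, Complex.ofReal_sin, Complex.sin, ← neg_mul]
  linear_combination -(Complex.exp (-((2 * π * k / N : ℝ) : ℂ) * Complex.I) -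
    Complex.exp (((2 * π * k / N : ℝ) : ℂ) * Complex.I)) * Complex.I_sq

theorem Sser_eq (N a b : ℤ) (t : ℝ) :
    Sser N a b t = 2 * Complex.I * (∑' p : ℕ+ × ℕ+, Real.sin (p.1 * (2 * π * a / N)) / p.1 *
      residueSign N b p.2 * rexp (-(2 * π / N ^ 2 * p.1 * p.2 * t⁻¹)) : ℝ) := by
  rw [Sser, Complex.ofReal_tsum, ← tsum_mul_left]
  refine tsum_congr fun p => ?_
  rw [zetaN_zpow_sub_zpow_neg]
  have h1 : (2 * π * ((a * (p.1 : ℤ) : ℤ) : ℝ) / N : ℝ) = p.1 * (2 * π * a / N) := by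
    push_cast; ring
  have h2 : (-(2 * π * ((p.1 : ℝ) : ℂ) * ((p.2 : ℝ) : ℂ)) / (((N : ℝ) : ℂ) ^ 2 * t) : ℂ) =
      ((-(2 * π / N ^ 2 * p.1 * p.2 * t⁻¹) : ℝ) : ℂ) := by
    push_cast; ring
  have h3 : (if (p.2 : ℤ) ≡ b [ZMOD N] then (1 : ℂ)
      else if (p.2 : ℤ) ≡ -b [ZMOD N] then -1 else 0) = (residueSign N b p.2 : ℝ) := by
    unfold residueSign
    split_ifs <;> simp
  rw [h1, h2, h3]
  push_cast
  ring

theorem integral_dSser_eq_integral_real (N a b : ℤ) (hN : 1 ≤ N) :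
    ∫ t in Set.Ioi (0 : ℝ), (1 / (Complex.I * N * t)) * deriv (Sser N a b) t =
      2 * ((2 * π / N ^ 2 : ℝ) : ℂ) / N * (∫ u in Set.Ioi (0 : ℝ), u * ∑' p : ℕ+ × ℕ+,
        Real.sin (p.1 * (2 * π * a / N)) * residueSign N b p.2 *
          (p.2 * rexp (-(2 * π / N ^ 2 * u * p.1 * p.2))) : ℝ) := by
  have hN' : (0 : ℝ) < N := by exact_mod_cast hN
  exact integral_inv_mul_deriv_comp_inv N
    (fun u hu => hasDerivAt_tsum_exp (s := fun m : ℕ+ => Real.sin (m * (2 * π * a / N)))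
      (fun _ => abs_sin_le_one _) (abs_residueSign_le_one N b) (by positivity) hu)
    fun t _ => Sser_eq N a b t

theorem residueSign_of_dvd_two_mul {N b : ℤ} (h : N ∣ 2 * b) (n : ℕ+) :
    residueSign N b n = if (n : ℤ) ≡ b [ZMOD N] then 1 else 0 := by
  have hb : b ≡ -b [ZMOD N] := (Int.modEq_iff_dvd.2 (by
    rw [show -b - b = -(2 * b) by ring]; exact h.neg_right))
  unfold residueSign
  split_ifs with h1 h2
  · rfl
  · exact absurd (h2.trans hb.symm) h1
  · rfl

theorem not_summable_residueSign_div {N b : ℤ} (hN : 1 ≤ N) (h : N ∣ 2 * b) :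
    ¬ Summable fun n : ℕ+ => residueSign N b n / n := by
  lift N to ℕ using by omega
  intro hs
  refine Real.not_summable_indicator_one_div_natCast (m := N) (by omega) (b : ZMod N) ?_
  refine (PNat.coe_injective.summable_iff ?_).1 (hs.congr fun n => ?_)
  · intro n hn
    obtain rfl : n = 0 := by
      by_contra h
      exact hn ⟨⟨n, Nat.pos_of_ne_zero h⟩, rfl⟩
    simp [Set.indicator]
  · have : ((n : ℕ) : ZMod N) = (b : ZMod N) ↔ (n : ℤ) ≡ b [ZMOD N] := by
      rw [← ZMod.intCast_eq_intCast_iff]; simp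
    rw [residueSign_of_dvd_two_mul h]
    simp only [Function.comp, Set.indicator, Set.mem_ofPred_eq, this]
    split_ifs <;> simp

theorem neg_I_mul_one_add_div_one_sub (N b : ℤ) :
    -Complex.I * ((1 + zetaN N ^ b) / (1 - zetaN N ^ b)) = Real.cot (π * (b / N)) := by
  rw [Complex.ofReal_cot, Complex.ofReal_mul, Complex.cot_pi_eq_exp_ratio, zetaN_zpow,
    show 2 * (π : ℂ) * Complex.I * ((b / N : ℝ) : ℂ) =
      ((2 * π * b / N : ℝ) : ℂ) * Complex.I by push_cast; ring,
    ← Complex.inv_I, div_mul_eq_div_div, add_comm]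
  ring

theorem cot_eq_zero_of_dvd_two_mul {N b : ℤ} (hN : 1 ≤ N) (hb : ¬ N ∣ b) (h : N ∣ 2 * b) :
    Real.cot (π * (b / N)) = 0 := by
  obtain ⟨j, hj⟩ := h
  have hodd : Odd j := by
    rw [← Int.not_even_iff_odd]
    rintro ⟨i, rfl⟩
    exact hb ⟨i, by linarith⟩
  obtain ⟨k, rfl⟩ := hodd
  have hN' : (N : ℝ) ≠ 0 := by exact_mod_cast (by omega : N ≠ 0)
  have hj' : 2 * (b : ℝ) = N * (2 * k + 1) := by exact_mod_cast hj
  rw [Real.cot_eq_cos_div_sin, Real.cos_eq_zero_iff.2 ⟨k, ?_⟩, zero_div]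
  field_simp
  linarith

theorem zetaN_zpow_emod (N b : ℤ) (hN : 1 ≤ N) : zetaN N ^ (b % N) = zetaN N ^ b := by
  have hN' : (N : ℂ) ≠ 0 := by exact_mod_cast (by omega : N ≠ 0)
  have h0 : zetaN N ≠ 0 := Complex.exp_ne_zero _
  have h1 : zetaN N ^ N = 1 := by
    rw [zetaN, ← Complex.exp_int_mul, mul_div_cancel₀ _ hN', Complex.exp_two_pi_mul_I]
  conv_rhs => rw [← Int.emod_add_mul_ediv b N, zpow_add₀ h0, zpow_mul, h1,
    one_zpow, mul_one]

theorem integral_mul_tsum_sin_residueSign {N r : ℕ} (hr : 0 < r) (hrN : r < N)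
    (h2 : ¬ (N : ℤ) ∣ 2 * r) {c : ℝ} (hc : 0 < c) (θ : ℝ) :
    ∫ u in Set.Ioi (0 : ℝ), u * ∑' i : ℕ+ × ℕ+, Real.sin (i.1 * θ) * residueSign N r i.2 *
        (i.2 * rexp (-(c * u * i.1 * i.2))) =
      Cl2 θ * (π / N * Real.cot (π * (r / N)) / c ^ 2) := by
  have hN : 0 < N := by omega
  have hN' : (0 : ℝ) < N := by exact_mod_cast hN
  let P : ℕ → ℕ+ := fun k => ⟨k * N + r, by positivity⟩
  let Q : ℕ → ℕ+ := fun k => ⟨k * N + (N - r), by have := Nat.sub_pos_of_lt hrN; positivity⟩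
  have hPc (k : ℕ) : ((P k : ℕ) : ℝ) = k * N + r := by simp [P]
  have hQc (k : ℕ) : ((Q k : ℕ) : ℝ) = k * N + (N - r) := by simp [Q, Nat.cast_sub hrN.le]
  have hPz (k : ℕ) : ((P k : ℕ) : ℤ) = k * N + r := by simp [P]
  have hQz (k : ℕ) : ((Q k : ℕ) : ℤ) = k * N + (N - r) := by simp [Q, Nat.cast_sub hrN.le]
  have hP : P.Injective := fun i j h => by
    have h := congrArg (fun n : ℕ+ => ((n : ℕ) : ℝ)) h
    simp only [hPc] at h
    exact_mod_cast mul_right_cancel₀ hN'.ne' (add_right_cancel h)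
  have hQ : Q.Injective := fun i j h => by
    have h := congrArg (fun n : ℕ+ => ((n : ℕ) : ℝ)) h
    simp only [hQc] at h
    exact_mod_cast mul_right_cancel₀ hN'.ne' (add_right_cancel h)
  have heP (k : ℕ) : residueSign N r (P k) = 1 := by
    refine if_pos (Int.modEq_iff_dvd.2 ⟨-k, ?_⟩)
    rw [hPz]; ring
  have heQ (k : ℕ) : residueSign N r (Q k) = -1 := by
    have h : ((Q k : ℕ) : ℤ) ≡ -r [ZMOD N] := Int.modEq_iff_dvd.2 ⟨-(k + 1), by rw [hQz]; ring⟩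
    refine (if_neg fun h' => h2 ?_).trans (if_pos h)
    have := (h.symm.trans h').dvd
    rwa [sub_neg_eq_add, ← two_mul] at this
  have he (n : ℕ+) (hnP : n ∉ Set.range P) (hnQ : n ∉ Set.range Q) : residueSign N r n = 0 := by
    have hrange {q : ℕ} (hq : q < N) (h : ((n : ℕ) : ℤ) ≡ q [ZMOD N]) :
        (n : ℕ) / N * N + q = n := by
      have h' : (n : ℕ) % N = q := by
        have h' : (n : ℕ) % N = q % N := Int.natCast_modEq_iff.1 h
        rwa [Nat.mod_eq_of_lt hq] at h'
      rw [← h']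
      exact Nat.div_add_mod' _ _
    refine (if_neg fun h => hnP ⟨(n : ℕ) / N, PNat.eq (hrange hrN h)⟩).trans
      (if_neg fun h => hnQ ⟨(n : ℕ) / N, PNat.eq (hrange (Nat.sub_lt hN hr) (h.trans ?_))⟩)
    refine Int.modEq_iff_dvd.2 ⟨1, ?_⟩
    rw [Nat.cast_sub hrN.le]; ring
  have hsin (m : ℕ+) : |Real.sin (m * θ)| ≤ 1 := abs_sin_le_one _
  have hmul (k : ℕ) : (k : ℝ) ≤ k * N := le_mul_of_one_le_right (by positivity)
    (by exact_mod_cast hN)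
  have hr1 : (1 : ℝ) ≤ r := by exact_mod_cast hr
  have hrN1 : (r : ℝ) + 1 ≤ N := by exact_mod_cast hrN
  calc _ = ∫ u in Set.Ioi (0 : ℝ), ∑' i : ℕ+ × ℕ, u * (Real.sin (i.1 * θ) *
        (P i.2 * rexp (-(c * u * i.1 * P i.2)) - Q i.2 * rexp (-(c * u * i.1 * Q i.2)))) := by
        refine setIntegral_congr_fun measurableSet_Ioi fun u hu => ?_
        have hs := summable_mul_mul_exp (s := fun m => Real.sin (m * θ)) (e := fun _ => 1)
          hsin (by simp) (mul_pos hc hu)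
        simp only [mul_one] at hs
        simp only [tsum_mul_left]
        simp only [mul_sub (Real.sin _)]
        rw [← tsum_prod_mul_eq_tsum_sub hs hP hQ heP heQ he]
        congr 1
        exact tsum_congr fun i => by ring
    _ = ∑' i : ℕ+ × ℕ, Real.sin (i.1 * θ) / (i.1 : ℝ) ^ 2 *
          ((1 / (P i.2 : ℝ) - 1 / (Q i.2 : ℝ)) / c ^ 2) := by
        refine integral_tsum_exp_sub_exp (p := fun k => (P k : ℝ)) (q := fun k => (Q k : ℝ))
          (L := N) hsin (fun k => ?_) (fun k => ?_) (fun k => ?_) hc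
        · rw [hPc]; linarith [hmul k]
        · rw [hQc]; linarith [hmul k]
        · rw [hPc, hQc, abs_le]; constructor <;> linarith
    _ = _ := by
        have hcot := ((hasSum_one_div_sub_one_div_eq_cot (x := r / N) (by positivity)
          ((div_lt_one hN').2 (by linarith))).div_const (N : ℝ)).div_const (c ^ 2)
        have hterm (k : ℕ) : (1 / ((k : ℝ) + r / N) - 1 / (k + 1 - r / N)) / N / c ^ 2 =
            (1 / (P k : ℝ) - 1 / (Q k : ℝ)) / c ^ 2 := by
          have e1 : (k : ℝ) + r / N = (k * N + r) / N := by field_simp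
          have e2 : (k : ℝ) + 1 - r / N = (k * N + (N - r)) / N := by field_simp; ring
          rw [hPc, hQc, e1, e2, one_div_div, one_div_div, sub_div, div_div_cancel_left' hN'.ne',
            div_div_cancel_left' hN'.ne', one_div, one_div]
        simp only [hterm] at hcot
        have hm : Summable fun m : ℕ+ => Real.sin (m * θ) / (m : ℝ) ^ 2 := by
          refine .of_norm_bounded (g := fun m : ℕ+ => 1 / (m : ℝ) ^ 2)
            ((Real.summable_one_div_nat_pow.2 one_lt_two).comp_injective PNat.coe_injective)
            fun m => ?_
          rw [norm_div, Real.norm_of_nonneg (by positivity : (0 : ℝ) ≤ (m : ℝ) ^ 2)]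
          gcongr
          exact hsin m
        rw [← tsum_mul_tsum_of_summable_norm hm.norm hcot.summable.norm, hcot.tsum_eq, Cl2]
        ring

/-- For `a`, `b` not divisible by `N`,
`∫₀^∞ (1/(iNt)) dS(t) = -i·Cl₂(2πa/N)·(1+ζ^b)/(1-ζ^b)`. -/
theorem integral_dSser (N a b : ℤ) (hN : 1 ≤ N) (ha : ¬ (N ∣ a)) (hb : ¬ (N ∣ b)) :
    ∫ t in Set.Ioi (0 : ℝ), (1 / (Complex.I * N * t)) * deriv (Sser N a b) t =
      -Complex.I * (Cl2 (2 * π * a / N) : ℂ) *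
        ((1 + zetaN N ^ b) / (1 - zetaN N ^ b)) := by
  have hN' : (0 : ℝ) < N := by exact_mod_cast hN
  have hNC : (N : ℂ) ≠ 0 := by exact_mod_cast hN'.ne'
  have hπ : (π : ℂ) ≠ 0 := by exact_mod_cast pi_ne_zero
  have hc : 0 < 2 * π / (N : ℝ) ^ 2 := by positivity
  rw [integral_dSser_eq_integral_real N a b hN, mul_right_comm (-Complex.I)]
  by_cases h2 : N ∣ 2 * b
  · rw [neg_I_mul_one_add_div_one_sub, cot_eq_zero_of_dvd_two_mul hN hb h2]
    by_cases hθ : Real.sin (2 * π * a / N) = 0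
    · obtain ⟨k, hk⟩ := Real.sin_eq_zero_iff.1 hθ
      have hz (m : ℕ+) : Real.sin (m * (2 * π * a / N)) = 0 := by
        rw [← hk, ← mul_assoc]
        exact_mod_cast Real.sin_int_mul_pi (m * k)
      simp [hz]
    · rw [integral_mul_tsum_sin_eq_zero hθ hc (fun n => ?_)
        (fun n => (abs_le.1 (abs_residueSign_le_one N b n)).2)
        (not_summable_residueSign_div hN h2)]
      · simp
      · rw [residueSign_of_dvd_two_mul h2]
        split_ifs <;> simp
  · have hmod : b % N ≡ b [ZMOD N] := Int.mod_modEq b N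
    have hsign : residueSign N b = residueSign N (b % N) := by
      ext n
      have h1 : (n : ℤ) ≡ b [ZMOD N] ↔ (n : ℤ) ≡ b % N [ZMOD N] :=
        ⟨fun h => h.trans hmod.symm, fun h => h.trans hmod⟩
      have h2 : (n : ℤ) ≡ -b [ZMOD N] ↔ (n : ℤ) ≡ -(b % N) [ZMOD N] :=
        ⟨fun h => h.trans hmod.symm.neg, fun h => h.trans hmod.neg⟩
      simp only [residueSign, h1, h2]
    rw [← zetaN_zpow_emod N b hN, neg_I_mul_one_add_div_one_sub, hsign]
    have hr0 : 0 < b % N := lt_of_le_of_ne (Int.emod_nonneg _ (by omega))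
      fun h => hb (Int.dvd_of_emod_eq_zero h.symm)
    have hrN : b % N < N := Int.emod_lt_of_pos _ (by omega)
    have h2r : ¬ N ∣ 2 * (b % N) := fun h =>
      h2 ((Int.ModEq.dvd_iff (hmod.mul_left 2)).1 h)
    generalize b % N = r at *
    lift r to ℕ using hr0.le
    lift N to ℕ using by omega
    have key := integral_mul_tsum_sin_residueSign (by omega) (by omega) h2r hc (2 * π * a / N)
    simp only [Int.cast_natCast] at key hNC ⊢
    rw [key]
    push_cast
    field_simp
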